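/- Let t : ℕ → ℝ satisfy t(0) = 0 and t(k)/k → μ as k → ∞ for some μ > 0, and let ζ ∈ (0,1). Then there exist α > 0 and C > 0 such that for every N ∈ ℕ and every m : ℕ → ℝ satisfying 0 ≤ m(k) ≤ exp(t(k+1) − t(k)) for all k ≤ N, one has ∑_{k=0}^{N} m(k)·exp((1−ζ)·t(k)) ≤ C·exp((1−α)·t(N)). -/

import Mathlib

open Filter

/-!
Since `t k ≈ μ k`, the factor `exp (t (k + 1) - t k)` is subexponential in `k`, so the `k`-th term
of the sum grows at most at the exponential rate `(1 - ζ) μ`, whereas `exp ((1 - α) t N)` grows at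
rate `(1 - α) μ`. If the latter rate is positive and larger than the former, there is room for an
intermediate rate `c > 0`: the terms are `O(exp (c k))`, and a growing geometric sum is comparable
to its last term.
-/

open Asymptotics Finset Real Topology

lemma tendsto_sub_succ_div_natCast {t : ℕ → ℝ} {μ : ℝ}
    (ht : Tendsto (fun k : ℕ ↦ t k / k) atTop (𝓝 μ)) :
    Tendsto (fun k : ℕ ↦ (t (k + 1) - t k) / k) atTop (𝓝 0) := by
  have h_shift : Tendsto (fun k : ℕ ↦ t (k + 1) / ((k + 1 : ℕ) : ℝ)) atTop (𝓝 μ) :=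
    ht.comp (tendsto_add_atTop_nat 1)
  have h_ratio : Tendsto (fun k : ℕ ↦ ((k : ℝ) / (k + 1))⁻¹) atTop (𝓝 1) := by
    simpa only [inv_one] using (tendsto_natCast_div_add_atTop (1 : ℝ)).inv₀ one_ne_zero
  have h_succ : Tendsto (fun k : ℕ ↦ t (k + 1) / k) atTop (𝓝 μ) := by
    refine mul_one μ ▸ (h_shift.mul h_ratio).congr fun k ↦ ?_
    rw [inv_div, Nat.cast_succ, div_mul_div_cancel₀ (by positivity)]
  simpa only [sub_div, sub_self] using h_succ.sub ht

lemma isBigO_exp_of_tendsto_div {ι : Type*} {l : Filter ι} {u v w : ι → ℝ} {a b : ℝ}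
    (hw : ∀ᶠ i in l, 0 < w i) (hu : Tendsto (fun i ↦ u i / w i) l (𝓝 a))
    (hv : Tendsto (fun i ↦ v i / w i) l (𝓝 b)) (hab : a < b) :
    (fun i ↦ exp (u i)) =O[l] fun i ↦ exp (v i) := by
  refine IsBigO.of_bound' ?_
  filter_upwards [hw, hu.eventually_lt hv hab] with i hwi huv
  have huv' : u i ≤ v i := ((div_lt_div_iff_of_pos_right hwi).1 huv).le
  simpa only [norm_eq_abs, abs_exp, exp_le_exp] using huv'

lemma isBigO_sum_range_succ_pow {E : Type*} [SeminormedAddCommGroup E] {f : ℕ → E} {r : ℝ}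
    (hr : 1 < r) (hf : f =O[atTop] fun k ↦ r ^ k) :
    (fun n ↦ ∑ k ∈ range (n + 1), f k) =O[atTop] fun n ↦ r ^ n := by
  have hr0 : 0 < r := one_pos.trans hr
  obtain ⟨C, hC, hfC⟩ := bound_of_isBigO_nat_atTop hf
  refine .of_bound (C * (r / (r - 1))) (.of_forall fun n ↦ ?_)
  rw [norm_of_nonneg (pow_nonneg hr0.le n)]
  calc ‖∑ k ∈ range (n + 1), f k‖
      ≤ ∑ k ∈ range (n + 1), C * r ^ k := norm_sum_le_of_le _ fun k _ ↦ by
        simpa only [norm_pow, norm_of_nonneg hr0.le] using hfC (pow_pos hr0 k).ne'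
    _ = C * ((r ^ (n + 1) - 1) / (r - 1)) := by rw [← mul_sum, geom_sum_eq hr.ne']
    _ ≤ C * (r ^ (n + 1) / (r - 1)) := by
        have : 0 < r - 1 := sub_pos.2 hr
        gcongr
        exact sub_le_self _ zero_le_one
    _ = C * (r / (r - 1)) * r ^ n := by ring

lemma isBigO_sum_range_succ_exp {u v : ℕ → ℝ} {a b : ℝ}
    (hu : Tendsto (fun k : ℕ ↦ u k / k) atTop (𝓝 a))
    (hv : Tendsto (fun k : ℕ ↦ v k / k) atTop (𝓝 b)) (hb : 0 < b) (hab : a < b) :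
    (fun n ↦ ∑ k ∈ range (n + 1), exp (u k)) =O[atTop] fun n ↦ exp (v n) := by
  obtain ⟨c, hc, hcb⟩ := exists_between (max_lt hb hab)
  obtain ⟨hc0, hac⟩ := max_lt_iff.1 hc
  have h_pos : ∀ᶠ k : ℕ in atTop, 0 < (k : ℝ) :=
    (eventually_gt_atTop 0).mono fun k hk ↦ Nat.cast_pos.2 hk
  have h_rate : Tendsto (fun k : ℕ ↦ k * c / k) atTop (𝓝 c) :=
    tendsto_const_nhds.congr' (h_pos.mono fun k hk ↦ (mul_div_cancel_left₀ c hk.ne').symm)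
  have h_terms : (fun k ↦ exp (u k)) =O[atTop] fun k ↦ exp c ^ k := by
    simpa only [exp_nat_mul] using isBigO_exp_of_tendsto_div h_pos hu h_rate hac
  have h_pow : (fun n ↦ exp c ^ n) =O[atTop] fun n ↦ exp (v n) := by
    simpa only [exp_nat_mul] using isBigO_exp_of_tendsto_div h_pos h_rate hv hcb
  exact (isBigO_sum_range_succ_pow (one_lt_exp_iff.2 hc0) h_terms).trans h_pow

theorem stmt5_general {t : ℕ → ℝ} {μ ζ α : ℝ}
    (ht : Tendsto (fun k : ℕ ↦ t k / k) atTop (𝓝 μ))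
    (hα : 0 < (1 - α) * μ) (hζα : (1 - ζ) * μ < (1 - α) * μ) :
    ∃ C > 0, ∀ (N : ℕ) (m : ℕ → ℝ), (∀ k ≤ N, m k ≤ exp (t (k + 1) - t k)) →
      ∑ k ∈ range (N + 1), m k * exp ((1 - ζ) * t k) ≤ C * exp ((1 - α) * t N) := by
  have h_scaled (c : ℝ) : Tendsto (fun k : ℕ ↦ c * t k / k) atTop (𝓝 (c * μ)) := by
    simpa only [mul_div_assoc] using ht.const_mul c
  have h_terms : Tendsto (fun k : ℕ ↦ (t (k + 1) - t k + (1 - ζ) * t k) / k) atTop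
      (𝓝 ((1 - ζ) * μ)) := by
    simpa only [add_div, zero_add] using (tendsto_sub_succ_div_natCast ht).add (h_scaled (1 - ζ))
  obtain ⟨C, hC, h_sum⟩ := bound_of_isBigO_nat_atTop
    (isBigO_sum_range_succ_exp h_terms (h_scaled (1 - α)) hα hζα)
  refine ⟨C, hC, fun N m hm ↦ ?_⟩
  calc ∑ k ∈ range (N + 1), m k * exp ((1 - ζ) * t k)
      ≤ ∑ k ∈ range (N + 1), exp (t (k + 1) - t k + (1 - ζ) * t k) := by
        refine sum_le_sum fun k hk ↦ ?_
        rw [exp_add]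
        gcongr
        exact hm k (mem_range_succ_iff.1 hk)
    _ ≤ C * exp ((1 - α) * t N) := by
        simpa only [norm_eq_abs, abs_exp] using (le_abs_self _).trans (h_sum (exp_ne_zero _))

/-- Summation estimate in the fifth step of the proof of the effective Veech criterion:
if the return times `t k` satisfy `t 0 = 0` and `t k / k → μ > 0`, and `ζ ∈ (0,1)`, then
there are `α > 0` and `C > 0` such that any Ostrowski-type sum
`∑_{k=0}^{N} m k · exp((1-ζ)·t k)` with `0 ≤ m k ≤ exp(t (k+1) - t k)` is bounded by
`C · exp((1-α)·t N)`. -/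
theorem stmt5 (t : ℕ → ℝ) (ht0 : t 0 = 0) (μ : ℝ) (hμ : 0 < μ)
    (hfreq : Tendsto (fun k : ℕ => t k / (k : ℝ)) atTop (nhds μ))
    (ζ : ℝ) (hζ : ζ ∈ Set.Ioo (0:ℝ) 1) :
    ∃ α > (0:ℝ), ∃ C > (0:ℝ), ∀ N : ℕ, ∀ m : ℕ → ℝ,
      (∀ k ≤ N, 0 ≤ m k ∧ m k ≤ Real.exp (t (k+1) - t k)) →
      ∑ k ∈ Finset.range (N+1), m k * Real.exp ((1 - ζ) * t k) ≤
        C * Real.exp ((1 - α) * t N) := by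
  obtain ⟨C, hC, h⟩ := stmt5_general (ζ := ζ) (α := ζ / 2) hfreq
    (mul_pos (by linarith [hζ.2]) hμ) (mul_lt_mul_of_pos_right (by linarith [hζ.1]) hμ)
  exact ⟨ζ / 2, half_pos hζ.1, C, hC, fun N m hm ↦ h N m fun k hk ↦ (hm k hk).2⟩
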